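/- For every natural number n, the number of partitions of n such that, if 2j denotes the largest repeated part (which is necessarily even), then every positive even integer less than 2j appears at least twice, no odd part less than 2j appears at all, each odd part appears at most once, and no part greater than 2j is repeated, equals the number of partitions of n into parts none of which is congruent to 0, 2, or −2 modulo 7. -/

import Mathlib

/-- The largest repeated part of a partition (`0` if no part is repeated). -/
def largestRepeatedPart {n : ℕ} (π : n.Partition) : ℕ :=
  (π.parts.toFinset.filter (fun j => 2 ≤ π.parts.count j)).sup id


namespace RS
open Finset

section alg
variable {R : Type*} [CommRing R]

lemma pow_zero_of_le {x : R} {N : ℕ} (hx : x ^ N = 0) {e : ℕ} (h : N ≤ e) : x ^ e = 0 :=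
  pow_eq_zero_of_le h hx

/-- truncated product `(-x^a; x)_∞` -/
def E (x : R) (N a : ℕ) : R := ∏ k ∈ range N, (1 + x ^ (a + k))

lemma prod_stable_add {x : R} {N : ℕ} (hx : x ^ N = 0) (a : ℕ) {M : ℕ} (h : N ≤ M) :
    ∏ k ∈ range M, (1 + x ^ (a + k)) = E x N a := by
  unfold E
  obtain ⟨d, rfl⟩ := Nat.exists_eq_add_of_le h
  rw [prod_range_add, prod_eq_one (s := range d), mul_one]
  intro k _
  rw [pow_zero_of_le hx (by omega), add_zero]

lemma E_succ {x : R} {N : ℕ} (hx : x ^ N = 0) (a : ℕ) :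
    E x N a = (1 + x ^ a) * E x N (a + 1) := by
  rw [← prod_stable_add hx a (Nat.le_succ N), prod_range_succ', mul_comm, E]
  simp only [add_zero]
  congr 1
  exact prod_congr rfl fun k _ => by ring_nf

lemma E_large {x : R} {N : ℕ} (hx : x ^ N = 0) {a : ℕ} (h : N ≤ a) : E x N a = 1 := by
  unfold E
  refine prod_eq_one fun k _ => ?_
  rw [pow_zero_of_le hx (by omega), add_zero]

/-- `(y; y)_k` -/
def P (y : R) (k : ℕ) : R := ∏ i ∈ range k, (1 - y ^ (i + 1))

lemma P_succ (y : R) (k : ℕ) : P y (k + 1) = P y k * (1 - y ^ (k + 1)) := by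
  simp [P, prod_range_succ]

lemma P_zero (y : R) : P y 0 = 1 := by simp [P]

lemma P_large {y : R} {N : ℕ} (hy : y ^ N = 0) {M : ℕ} (h : N ≤ M) : P y M = P y N := by
  obtain ⟨d, rfl⟩ := Nat.exists_eq_add_of_le h
  unfold P
  rw [prod_range_add, prod_eq_one (s := range d), mul_one]
  intro k _
  rw [pow_zero_of_le hy (by omega), sub_zero]

lemma P_isUnit {y : R} {N : ℕ} (hy : y ^ N = 0) (k : ℕ) : IsUnit (P y k) := by
  induction k with
  | zero => simp [P]
  | succ k ih =>
    rw [P_succ]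
    refine ih.mul (IsNilpotent.isUnit_one_sub ⟨N, ?_⟩)
    rw [← pow_mul, mul_comm, pow_mul, hy, zero_pow (by omega)]

/-- inverse of `(x^2;x^2)_j` -/
noncomputable def d (x : R) (j : ℕ) : R := Ring.inverse (P (x ^ 2) j)

lemma sq_nil {x : R} {N : ℕ} (hx : x ^ N = 0) (k : ℕ) : (x ^ (k + 1)) ^ N = 0 := by
  rw [← pow_mul, mul_comm, pow_mul, hx, zero_pow (by omega)]

lemma P_mul_d {x : R} {N : ℕ} (hx : x ^ N = 0) (j : ℕ) : P (x ^ 2) j * d x j = 1 :=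
  Ring.mul_inverse_cancel _ (P_isUnit (sq_nil hx 1) j)

lemma d_zero (x : R) : d x 0 = 1 := by simp [d, P]

lemma d_succ {x : R} {N : ℕ} (hx : x ^ N = 0) (j : ℕ) :
    (1 - x ^ (2 * j + 2)) * d x (j + 1) = d x j := by
  have h1 := P_mul_d hx j
  have h2 := P_mul_d hx (j + 1)
  rw [P_succ, ← pow_mul, show 2 * (j + 1) = 2 * j + 2 by ring] at h2
  calc (1 - x ^ (2 * j + 2)) * d x (j + 1)
      = (P (x ^ 2) j * d x j) * ((1 - x ^ (2 * j + 2)) * d x (j + 1)) := by rw [h1, one_mul]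
    _ = (P (x ^ 2) j * (1 - x ^ (2 * j + 2)) * d x (j + 1)) * d x j := by ring
    _ = d x j := by rw [h2, one_mul]

noncomputable def A (x : R) (N m : ℕ) : R :=
  ∑ j ∈ range N, x ^ (2 * j ^ 2 + 2 * j * m) * E x N (m + 2 * j + 1) * d x j

noncomputable def B (x : R) (N m : ℕ) : R :=
  ∑ j ∈ range N, x ^ (2 * j ^ 2 + 2 * j + 2 * j * m) * E x N (m + 2 * j + 1) * d x j

/-- telescoping rearrangement -/
lemma sum_shift (f g h k : ℕ → R) (N : ℕ) (hf : ∀ n, f n = g n + h n) (g0 : g 0 = 0)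
    (gN : g N = 0) (hk : ∀ n, k n = g (n + 1) + h n) :
    ∑ n ∈ range N, f n = ∑ n ∈ range N, k n := by
  simp_rw [hf, hk, sum_add_distrib]
  congr 1
  have := sum_range_succ g N
  rw [sum_range_succ', g0, gN, add_zero, add_zero] at this
  exact this.symm

lemma B_rec {x : R} {N : ℕ} (hx : x ^ N = 0) (m : ℕ) :
    B x N m = A x N (m + 1) + x ^ (m + 1) * B x N (m + 1) := by
  unfold A B
  rw [mul_sum, ← sum_add_distrib]
  refine sum_congr rfl fun j _ => ?_
  rw [E_succ hx, show m + 1 + 2 * j + 1 = m + 2 * j + 1 + 1 by ring]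
  ring

lemma A_rec {x : R} {N : ℕ} (hx : x ^ N = 0) (hN : 0 < N) (m : ℕ) :
    A x N m = B x N m + x ^ (2 * m + 2) * A x N (m + 2) := by
  unfold A B
  rw [mul_sum, ← sum_add_distrib]
  refine sum_shift _ (fun j => x ^ (2 * j ^ 2 + 2 * j * m) * (1 - x ^ (2 * j)) *
    E x N (m + 2 * j + 1) * d x j)
    (fun j => x ^ (2 * j ^ 2 + 2 * j + 2 * j * m) * E x N (m + 2 * j + 1) * d x j) _ N ?_ ?_ ?_ ?_
  · intro n; ring
  · simp
  · rw [pow_zero_of_le hx (by nlinarith)]; ring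
  · intro n
    rw [add_comm, show 2 * (n + 1) = 2 * n + 2 by ring,
      show m + (2 * n + 2) + 1 = m + 2 + 2 * n + 1 by ring, ← d_succ hx n]
    ring

lemma A_large {x : R} {N : ℕ} (hx : x ^ N = 0) (hN : 0 < N) {m : ℕ} (h : N ≤ m) :
    A x N m = 1 := by
  unfold A
  rw [sum_eq_single_of_mem 0 (by simpa using hN)]
  · simp [E_large hx (show N ≤ m + 1 by omega), d_zero]
  · intro j _ hj
    rw [pow_zero_of_le hx]; · ring
    have : 1 ≤ j := by omega
    nlinarith

lemma B_large {x : R} {N : ℕ} (hx : x ^ N = 0) (hN : 0 < N) {m : ℕ} (h : N ≤ m) :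
    B x N m = 1 := by
  unfold B
  rw [sum_eq_single_of_mem 0 (by simpa using hN)]
  · simp [E_large hx (show N ≤ m + 1 by omega), d_zero]
  · intro j _ hj
    rw [pow_zero_of_le hx]; · ring
    have : 1 ≤ j := by omega
    nlinarith

/-- `(x^{n+1};x)_m` -/
def W (x : R) (m n : ℕ) : R := ∏ k ∈ range m, (1 - x ^ (n + 1 + k))

lemma W_right (x : R) (m n : ℕ) : W x (m + 1) n = (1 - x ^ (m + n + 1)) * W x m n := by
  rw [W, prod_range_succ, mul_comm, W, show n + 1 + m = m + n + 1 by ring]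

lemma W_left (x : R) (m n : ℕ) : W x (m + 1) n = (1 - x ^ (n + 1)) * W x m (n + 1) := by
  rw [W, prod_range_succ', mul_comm, W, add_zero]
  congr 1
  exact prod_congr rfl fun k _ => by ring_nf

/-- theta-type sums; `i ≤ 7` -/
def U (x : R) (N i m : ℕ) : R :=
  ∑ n ∈ range N, (-1) ^ n * x ^ (3 * m * n + 7 * n.choose 2 + (7 - i) * n) *
    (1 - x ^ ((m + 2 * n + 1) * i)) * W x m n

lemma choose_two_succ (n : ℕ) : (n + 1).choose 2 = n.choose 2 + n := by
  rw [Nat.choose_succ_succ' n 1]; simp [add_comm]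

lemma U1_rec {x : R} {N : ℕ} (hx : x ^ N = 0) (m : ℕ) :
    U x N 1 m = U x N 3 (m + 1) := by
  unfold U
  refine sum_shift _ (fun n => (-1) ^ n * x ^ (3 * m * n + 7 * n.choose 2 + 6 * n) *
    ((1 - x ^ n) * W x m n))
    (fun n => (-1) ^ n * x ^ (3 * m * n + 7 * n.choose 2 + 7 * n) * ((1 - x ^ (m + n + 1)) * W x m n))
    _ N ?_ ?_ ?_ ?_
  · intro n; norm_num; ring
  · simp
  · rw [pow_zero_of_le hx (by nlinarith)]; ring
  · intro n
    rw [← W_left, ← W_right, choose_two_succ]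
    norm_num
    ring

lemma U2_rec {x : R} {N : ℕ} (hx : x ^ N = 0) (m : ℕ) :
    U x N 2 m = U x N 1 m + x ^ (m + 1) * U x N 2 (m + 1) := by
  rw [← sub_eq_iff_eq_add']
  unfold U
  rw [mul_sum, ← sum_sub_distrib]
  refine sum_shift _ (fun n => (-1) ^ n * x ^ (3 * m * n + 7 * n.choose 2 + 5 * n) *
    ((1 - x ^ n) * W x m n))
    (fun n => (-1) ^ n * x ^ (3 * m * n + 7 * n.choose 2 + 7 * n + m + n + 1) *
      ((1 - x ^ (m + n + 1)) * W x m n))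
    _ N ?_ ?_ ?_ ?_
  · intro n; norm_num; ring
  · simp
  · rw [pow_zero_of_le hx (by nlinarith)]; ring
  · intro n
    rw [← W_left, ← W_right, choose_two_succ]
    norm_num
    ring

lemma U3_rec {x : R} {N : ℕ} (hx : x ^ N = 0) (m : ℕ) :
    U x N 3 m = U x N 2 m + x ^ (2 * m + 2) * U x N 1 (m + 1) := by
  rw [← sub_eq_iff_eq_add']
  unfold U
  rw [mul_sum, ← sum_sub_distrib]
  refine sum_shift _ (fun n => (-1) ^ n * x ^ (3 * m * n + 7 * n.choose 2 + 4 * n) *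
    ((1 - x ^ n) * W x m n))
    (fun n => (-1) ^ n * x ^ (3 * m * n + 7 * n.choose 2 + 7 * n + 2 * (m + n + 1)) *
      ((1 - x ^ (m + n + 1)) * W x m n))
    _ N ?_ ?_ ?_ ?_
  · intro n; norm_num; ring
  · simp
  · rw [pow_zero_of_le hx (by nlinarith)]; ring
  · intro n
    rw [← W_left, ← W_right, choose_two_succ]
    norm_num
    ring

lemma U_large {x : R} {N : ℕ} (hx : x ^ N = 0) (hN : 0 < N) {m i : ℕ} (h : N ≤ m) (hi : 0 < i) :
    U x N i m = P x N := by
  unfold U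
  rw [sum_eq_single_of_mem 0 (by simpa using hN)]
  · rw [pow_zero_of_le hx (e := (m + 2 * 0 + 1) * i) (by nlinarith), ← P_large hx h]
    simp [W, P, add_comm]
  · intro j _ hj
    rw [pow_zero_of_le hx]; · ring
    have : 1 ≤ j := by omega
    nlinarith

lemma U_eq {x : R} {N : ℕ} (hx : x ^ N = 0) (hN : 0 < N) (t : ℕ) : ∀ m, N ≤ m + t →
    U x N 3 m = P x N * A x N m ∧ U x N 2 m = P x N * B x N m := by
  induction t with
  | zero =>
    intro m hm
    rw [add_zero] at hm
    rw [A_large hx hN hm, B_large hx hN hm, U_large hx hN hm (by omega),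
      U_large hx hN hm (by omega)]
    simp
  | succ t ih =>
    intro m hm
    have h1 := ih (m + 1) (by omega)
    have h2 := ih (m + 2) (by omega)
    have hB : U x N 2 m = P x N * B x N m := by
      rw [U2_rec hx, U1_rec hx, h1.1, h1.2, B_rec hx m]; ring
    refine ⟨?_, hB⟩
    rw [U3_rec hx, hB, U1_rec hx, h2.1, A_rec hx hN m]; ring

theorem main_alg {x : R} {N : ℕ} (hx : x ^ N = 0) (hN : 0 < N) :
    P x N * B x N 0 = ∑ n ∈ range N, (-1) ^ n * x ^ (7 * n.choose 2 + 5 * n) *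
      (1 - x ^ (4 * n + 2)) := by
  rw [← (U_eq hx hN N 0 (by omega)).2, U]
  refine sum_congr rfl fun n _ => ?_
  simp [W]
  ring

/-- Gaussian binomials -/
def G (y : R) : ℕ → ℕ → R
  | _, 0 => 1
  | 0, _ + 1 => 0
  | n + 1, k + 1 => y ^ (k + 1) * G y n (k + 1) + G y n k

lemma G_zero_right (y : R) (n : ℕ) : G y n 0 = 1 := by cases n <;> simp [G]

lemma G_gt (y : R) (n : ℕ) : ∀ k, n < k → G y n k = 0 := by
  induction n with
  | zero => intro k hk; cases k with
    | zero => omega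
    | succ k => simp [G]
  | succ n ih => intro k hk; cases k with
    | zero => omega
    | succ k => simp [G, ih (k + 1) (by omega), ih k (by omega)]

lemma G_self (y : R) (n : ℕ) : G y n n = 1 := by
  induction n with
  | zero => simp [G]
  | succ n ih => simp [G, ih, G_gt y n (n + 1) (by omega)]

lemma G_prod (y : R) (s : ℕ) : ∀ k l, k + l = s → G y s k * P y k * P y l = P y s := by
  induction s with
  | zero =>
    intro k l h
    obtain ⟨rfl, rfl⟩ : k = 0 ∧ l = 0 := by omega
    simp [G, P]
  | succ s ih =>
    intro k l h
    rcases k with _ | k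
    · simp [G_zero_right, P_zero]; congr 1; omega
    rcases l with _ | l
    · obtain rfl : k = s := by omega
      simp [G_self, P_zero]
    have h1 := ih (k + 1) l (by omega)
    have h2 := ih k (l + 1) (by omega)
    rw [P_succ y s, G, P_succ y l]
    rw [P_succ y l] at h2
    rw [P_succ y k] at h1 ⊢
    obtain rfl : s = k + l + 1 := by omega
    linear_combination y ^ (k + 1) * (1 - y ^ (l + 1)) * h1 + (1 - y ^ (k + 1)) * h2

/-- q-binomial theorem -/
lemma qbinom (y u v : R) (M : ℕ) :
    ∏ k ∈ range M, (u + v * y ^ k) =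
      ∑ k ∈ range (M + 1), y ^ k.choose 2 * G y M k * u ^ (M - k) * v ^ k := by
  induction M generalizing v with
  | zero => simp [G]
  | succ M ih =>
    have : ∏ k ∈ range (M + 1), (u + v * y ^ k) = (u + v) * ∏ k ∈ range M, (u + (v * y) * y ^ k) := by
      rw [prod_range_succ', mul_comm]; simp only [pow_zero, mul_one]; congr 1
      exact prod_congr rfl fun k _ => by ring
    rw [this, ih (v * y), add_mul, sum_range_succ' _ (M + 1)]
    have h1 : u * ∑ k ∈ range (M + 1), y ^ k.choose 2 * G y M k * u ^ (M - k) * (v * y) ^ k =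
        ∑ k ∈ range (M + 1), y ^ (k + 1).choose 2 * (y ^ (k + 1) * G y M (k + 1)) *
          u ^ (M - k) * v ^ (k + 1) + u ^ (M + 1) := by
      rw [sum_range_succ', sum_range_succ, G_gt y M (M + 1) (by omega), mul_add, mul_sum]
      simp only [G_zero_right, Nat.sub_zero, pow_zero, Nat.choose_zero_succ, mul_zero, zero_mul,
        add_zero, mul_one, one_mul]
      congr 1
      · refine sum_congr rfl fun k hk => ?_
        have hk := mem_range.mp hk
        rw [show M - k = M - (k + 1) + 1 by omega]
        ring
      · ring
    rw [h1, mul_sum, add_right_comm, ← sum_add_distrib]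
    congr 1
    · refine sum_congr rfl fun k hk => ?_
      rw [G, choose_two_succ, Nat.add_sub_add_right]
      ring
    · simp [G_zero_right]

lemma prod_pow_range (y : R) (n : ℕ) : ∏ k ∈ range n, y ^ k = y ^ n.choose 2 := by
  induction n with
  | zero => simp
  | succ n ih => rw [prod_range_succ, ih, choose_two_succ, pow_add]

lemma choose_two_add (m j : ℕ) : (m + j).choose 2 = m.choose 2 + j.choose 2 + m * j := by
  induction j with
  | zero => simp
  | succ j ih => rw [← add_assoc, choose_two_succ, choose_two_succ, ih]; ring

lemma half_prod (x : R) (m : ℕ) :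
    ∏ k ∈ range (2 * (m + 1)), (x ^ (7 * m + 5) + -1 * (x ^ 7) ^ k) =
      ((-1) ^ (m + 1) * x ^ (7 * (m + 1).choose 2 + (m + 1) * (7 * m + 5))) *
      ((∏ k ∈ range (m + 1), (1 - x ^ (7 * k + 5))) *
      (∏ k ∈ range (m + 1), (1 - x ^ (7 * k + 2)))) := by
  rw [two_mul, prod_range_add]
  have h1 : ∏ k ∈ range (m + 1), (x ^ (7 * m + 5) + -1 * (x ^ 7) ^ k) =
      (-1) ^ (m + 1) * x ^ (7 * (m + 1).choose 2) *
        ∏ k ∈ range (m + 1), (1 - x ^ (7 * k + 5)) := by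
    have hneg : ∏ k ∈ range (m + 1), (-1 : R) = (-1) ^ (m + 1) := by simp
    rw [← prod_range_reflect (fun k => (1 - x ^ (7 * k + 5))), pow_mul,
      ← prod_pow_range, ← hneg, ← prod_mul_distrib, ← prod_mul_distrib]
    refine prod_congr rfl fun k hk => ?_
    have hk := mem_range.mp hk
    obtain ⟨t, rfl⟩ : ∃ t, m = k + t := ⟨m - k, by omega⟩
    rw [show k + t + 1 - 1 - k = t by omega]
    ring
  have h2 : ∏ k ∈ range (m + 1), (x ^ (7 * m + 5) + -1 * (x ^ 7) ^ (m + 1 + k)) =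
      x ^ ((m + 1) * (7 * m + 5)) *
        ∏ k ∈ range (m + 1), (1 - x ^ (7 * k + 2)) := by
    have hc : ∏ k ∈ range (m + 1), x ^ (7 * m + 5) = x ^ ((m + 1) * (7 * m + 5)) := by
      rw [prod_const, card_range, ← pow_mul, mul_comm]
    rw [← hc, ← prod_mul_distrib]
    refine prod_congr rfl fun k hk => ?_
    ring
  rw [h1, h2]
  ring

lemma term_neg (x g : R) (k t : ℕ) :
    (x ^ 7) ^ t.choose 2 * g * (x ^ (7 * (k + t) + 5)) ^ (2 * k + t + 2) * (-1) ^ t =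
    (-1) ^ (k + t + 1) * x ^ (7 * (k + t + 1).choose 2 + (k + t + 1) * (7 * (k + t) + 5)) *
      ((-1) ^ (k + 1) * g * x ^ (7 * (k + 1).choose 2 + 5 * (k + 1))) := by
  rw [show k + t + 1 = (k + 1) + t by ring, choose_two_add (k + 1) t]
  have hs : ((-1 : R) ^ (k + 1)) * (-1) ^ (k + 1) = 1 := by
    rw [← mul_pow]; simp
  have hc : 2 * (k + 1).choose 2 = k * (k + 1) := by
    rw [Nat.choose_two_right]
    rw [Nat.mul_div_cancel' (Nat.even_mul_pred_self _).two_dvd]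
    simp [mul_comm]
  generalize (k + 1).choose 2 = c at hc ⊢
  generalize t.choose 2 = b
  have he : 7 * b + (7 * (k + t) + 5) * (2 * k + t + 2) =
    7 * (c + b + (k + 1) * t) + (k + 1 + t) * (7 * (k + t) + 5) + (7 * c + 5 * (k + 1)) := by
    nlinarith
  rw [← pow_mul, ← pow_mul]
  have h3 := congrArg (fun e => x ^ e) he
  simp only [pow_add x _ ((7 * (k + t) + 5) * (2 * k + t + 2)),
    pow_add x _ (7 * c + 5 * (k + 1))] at h3
  generalize x ^ (7 * b) = z1 at *
  generalize x ^ ((7 * (k + t) + 5) * (2 * k + t + 2)) = z2 at *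
  generalize x ^ (7 * c + 5 * (k + 1)) = z3 at *
  generalize x ^ (7 * (c + b + (k + 1) * t) + (k + 1 + t) * (7 * (k + t) + 5)) = z4 at *
  rw [pow_add (-1 : R) (k + 1) t]
  generalize (-1 : R) ^ (k + 1) = w at *
  linear_combination g * (-1) ^ t * h3 - g * (-1) ^ t * z3 * z4 * hs

lemma term_pos (x g : R) (m j t : ℕ) (ht : m + 1 = j + t) :
    (x ^ 7) ^ (m + 1 + j).choose 2 * g * (x ^ (7 * m + 5)) ^ t * (-1) ^ (m + 1 + j) =
    (-1) ^ (m + 1) * x ^ (7 * (m + 1).choose 2 + (m + 1) * (7 * m + 5)) *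
      ((-1) ^ j * g * x ^ (7 * j.choose 2 + 2 * j)) := by
  rw [choose_two_add (m + 1) j]
  generalize (m + 1).choose 2 = c
  generalize j.choose 2 = b
  have he : 7 * (c + b + (m + 1) * j) + (7 * m + 5) * t =
    7 * c + (m + 1) * (7 * m + 5) + (7 * b + 2 * j) := by
    nlinarith
  rw [← pow_mul, ← pow_mul]
  have h3 := congrArg (fun e => x ^ e) he
  simp only [pow_add x _ ((7 * m + 5) * t), pow_add x _ (7 * b + 2 * j)] at h3
  rw [pow_add (-1 : R) (m + 1) j]
  linear_combination g * (-1) ^ (m + 1) * (-1) ^ j * h3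

lemma half_sum (x : R) (m : ℕ) :
    ∑ k ∈ range (2 * (m + 1) + 1), (x ^ 7) ^ k.choose 2 * G (x ^ 7) (2 * (m + 1)) k *
      (x ^ (7 * m + 5)) ^ (2 * (m + 1) - k) * (-1) ^ k =
    ((-1) ^ (m + 1) * x ^ (7 * (m + 1).choose 2 + (m + 1) * (7 * m + 5))) *
    (∑ i ∈ range (m + 1), (-1) ^ (i + 1) * G (x ^ 7) (2 * (m + 1)) (m - i) *
        x ^ (7 * (i + 1).choose 2 + 5 * (i + 1)) +
    ∑ j ∈ range (m + 2), (-1) ^ j * G (x ^ 7) (2 * (m + 1)) (m + 1 + j) *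
        x ^ (7 * j.choose 2 + 2 * j)) := by
  rw [show 2 * (m + 1) + 1 = (m + 1) + (m + 2) by ring, sum_range_add,
    mul_add ((-1) ^ (m + 1) * x ^ _), mul_sum, mul_sum]
  congr 1
  · rw [← sum_range_reflect]
    refine sum_congr rfl fun k hk => ?_
    have hk := mem_range.mp hk
    obtain ⟨t, rfl⟩ : ∃ t, m = k + t := ⟨m - k, by omega⟩
    rw [show k + t + 1 - 1 - k = t by omega, show k + t - k = t by omega,
      show 2 * (k + t + 1) - t = 2 * k + t + 2 by omega]
    exact term_neg x _ k t
  · refine sum_congr rfl fun j hj => ?_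
    have hj := mem_range.mp hj
    obtain ⟨t, ht⟩ : ∃ t, m + 1 = j + t := ⟨m + 1 - j, by omega⟩
    rw [show 2 * (m + 1) - (m + 1 + j) = t by omega]
    exact term_pos x _ m j t ht

open Polynomial in
lemma fin_jtp (m : ℕ) :
    (∏ k ∈ range (m + 1), (1 - (X : ℤ[X]) ^ (7 * k + 5))) *
      (∏ k ∈ range (m + 1), (1 - (X : ℤ[X]) ^ (7 * k + 2))) =
    ∑ i ∈ range (m + 1), (-1) ^ (i + 1) * G (X ^ 7) (2 * (m + 1)) (m - i) *
        X ^ (7 * (i + 1).choose 2 + 5 * (i + 1)) +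
    ∑ j ∈ range (m + 2), (-1) ^ j * G (X ^ 7) (2 * (m + 1)) (m + 1 + j) *
        X ^ (7 * j.choose 2 + 2 * j) := by
  have hne : ((-1) ^ (m + 1) * X ^ (7 * (m + 1).choose 2 + (m + 1) * (7 * m + 5)) : ℤ[X]) ≠ 0 :=
    mul_ne_zero (pow_ne_zero _ (by simp)) (pow_ne_zero _ X_ne_zero)
  refine mul_left_cancel₀ hne ?_
  exact (half_prod (X : ℤ[X]) m).symm.trans
    ((qbinom ((X : ℤ[X]) ^ 7) (X ^ (7 * m + 5)) (-1) (2 * (m + 1))).trans (half_sum X m))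

lemma map_G {S : Type*} [CommRing S] (f : R →+* S) (y : R) (n : ℕ) :
    ∀ k, f (G y n k) = G (f y) n k := by
  induction n with
  | zero => intro k; cases k <;> simp [G]
  | succ n ih => intro k; cases k with
    | zero => simp [G]
    | succ k => simp [G, ih]

lemma sum_stable (f : ℕ → R) {N M : ℕ} (h : N ≤ M) (hf : ∀ i, N ≤ i → f i = 0) :
    ∑ i ∈ range M, f i = ∑ i ∈ range N, f i := by
  symm
  apply sum_subset (by simpa using h)
  intro i _ hi
  exact hf i (by simpa using hi)

theorem jtp {x : R} {N : ℕ} (hx : x ^ N = 0) (hN : 0 < N) :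
    ∑ n ∈ range N, (-1) ^ n * x ^ (7 * n.choose 2 + 5 * n) * (1 - x ^ (4 * n + 2)) =
      (∏ k ∈ range N, (1 - x ^ (7 * k + 5))) * (∏ k ∈ range N, (1 - x ^ (7 * k + 2))) *
      P (x ^ 7) N := by
  have key := congrArg (Polynomial.eval₂RingHom (Int.castRingHom R) x) (fin_jtp (2 * N))
  simp only [map_mul, map_add, map_sum, map_prod, map_sub, map_one, map_pow, map_neg, map_G,
    Polynomial.coe_eval₂RingHom, Polynomial.eval₂_X] at key
  have stab (c : ℕ) (hc : 0 < c) : ∏ k ∈ range (2 * N + 1), (1 - x ^ (7 * k + c)) =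
      ∏ k ∈ range N, (1 - x ^ (7 * k + c)) := by
    rw [show 2 * N + 1 = N + (N + 1) by ring, prod_range_add, prod_eq_one (s := range (N + 1)),
      mul_one]
    intro k _
    rw [pow_zero_of_le hx (by omega), sub_zero]
  have hy : (x ^ 7) ^ N = 0 := sq_nil hx 6
  have hG (k l : ℕ) (hk : N ≤ k) (hl : N ≤ l) : G (x ^ 7) (k + l) k * P (x ^ 7) N = 1 := by
    have := G_prod (x ^ 7) (k + l) k l rfl
    rw [P_large hy hk, P_large hy hl, P_large hy (show N ≤ k + l by omega)] at this
    exact (P_isUnit hy N).mul_right_cancel (by rw [this, one_mul])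
  have hG' (k s : ℕ) (hk : N ≤ k) (hl : N + k ≤ s) : G (x ^ 7) s k * P (x ^ 7) N = 1 := by
    obtain ⟨l, rfl⟩ : ∃ l, s = k + l := ⟨s - k, by omega⟩
    exact hG k l hk (by omega)
  rw [stab 5 (by omega), stab 2 (by omega)] at key
  rw [key, add_mul, sum_mul, sum_mul]
  have s1 : ∑ i ∈ range (2 * N + 1), (-1) ^ (i + 1) * G (x ^ 7) (2 * (2 * N + 1)) (2 * N - i) *
        x ^ (7 * (i + 1).choose 2 + 5 * (i + 1)) * P (x ^ 7) N =
      ∑ i ∈ range N, (-1) ^ (i + 1) * x ^ (7 * (i + 1).choose 2 + 5 * (i + 1)) := by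
    rw [sum_stable _ (show N ≤ 2 * N + 1 by omega)]
    · refine sum_congr rfl fun i hi => ?_
      have hi := mem_range.mp hi
      linear_combination (-1) ^ (i + 1) * x ^ (7 * (i + 1).choose 2 + 5 * (i + 1)) *
        hG' (2 * N - i) (2 * (2 * N + 1)) (by omega) (by omega)
    · intro i _
      rw [pow_zero_of_le hx (e := 7 * (i + 1).choose 2 + 5 * (i + 1)) (by omega)]; ring
  have s2 : ∑ i ∈ range (2 * N + 2), (-1) ^ i * G (x ^ 7) (2 * (2 * N + 1)) (2 * N + 1 + i) *
        x ^ (7 * i.choose 2 + 2 * i) * P (x ^ 7) N =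
      ∑ i ∈ range (N + 1), (-1) ^ i * x ^ (7 * i.choose 2 + 2 * i) := by
    rw [sum_stable _ (show N + 1 ≤ 2 * N + 2 by omega)]
    · refine sum_congr rfl fun i hi => ?_
      have hi := mem_range.mp hi
      linear_combination (-1) ^ i * x ^ (7 * i.choose 2 + 2 * i) *
        hG' (2 * N + 1 + i) (2 * (2 * N + 1)) (by omega) (by omega)
    · intro i _
      rw [pow_zero_of_le hx (e := 7 * i.choose 2 + 2 * i) (by omega)]; ring
  rw [s1, s2, sum_range_succ']
  have s3 : ∑ i ∈ range N, (-1) ^ (i + 1) * x ^ (7 * (i + 1).choose 2 + 5 * (i + 1)) + 1 =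
      ∑ i ∈ range N, (-1) ^ i * x ^ (7 * i.choose 2 + 5 * i) := by
    have h := sum_range_succ' (fun i => (-1) ^ i * x ^ (7 * i.choose 2 + 5 * i)) N
    rw [sum_range_succ, pow_zero_of_le hx (e := 7 * N.choose 2 + 5 * N) (by omega)] at h
    simpa using h.symm
  have s4 : ∑ i ∈ range N, (-1) ^ (i + 1) * x ^ (7 * (i + 1).choose 2 + 2 * (i + 1)) =
      - ∑ i ∈ range N, (-1) ^ i * x ^ (7 * i.choose 2 + 5 * i) * x ^ (4 * i + 2) := by
    rw [← sum_neg_distrib]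
    refine sum_congr rfl fun i _ => ?_
    rw [choose_two_succ]; ring
  have s5 : ∑ n ∈ range N, (-1) ^ n * x ^ (7 * n.choose 2 + 5 * n) * (1 - x ^ (4 * n + 2)) =
    ∑ i ∈ range N, (-1) ^ i * x ^ (7 * i.choose 2 + 5 * i) -
      ∑ i ∈ range N, (-1) ^ i * x ^ (7 * i.choose 2 + 5 * i) * x ^ (4 * i + 2) := by
    rw [← sum_sub_distrib]
    exact sum_congr rfl fun i _ => by ring
  rw [s5, s4, ← s3]
  simp
  ring

end alg
end RS

namespace RS
open Finset

section count
open Polynomial Classical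

/-- generating polynomial of partitions with multiplicities restricted by `S` -/
noncomputable def gf (R : Type*) [CommRing R] (x : R) (M : ℕ) (S : ℕ → ℕ → Prop) : R :=
  ∏ i ∈ range M, ∑ c ∈ (range (M + 1)).filter (S (i + 1)), x ^ ((i + 1) * c)

lemma map_gf {R S : Type*} [CommRing R] [CommRing S] (f : R →+* S) (x : R) (M : ℕ)
    (T : ℕ → ℕ → Prop) : f (gf R x M T) = gf S (f x) M T := by
  simp [gf]

/-- partition built from multiplicities -/
def ms (M : ℕ) (f : Fin M → ℕ) : Multiset ℕ := ∑ i : Fin M, Multiset.replicate (f i) (i + 1 : ℕ)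

lemma count_ms (M : ℕ) (f : Fin M → ℕ) (i : Fin M) : (ms M f).count (i + 1 : ℕ) = f i := by
  unfold ms
  rw [Multiset.count_sum', Finset.sum_eq_single i]
  · simp
  · intro j _ hj
    rw [Multiset.count_replicate, if_neg]
    intro h
    apply hj
    ext
    omega
  · simp

lemma mem_ms {M : ℕ} {f : Fin M → ℕ} {a : ℕ} (h : a ∈ ms M f) : ∃ i : Fin M, a = i + 1 := by
  unfold ms at h
  rw [Multiset.mem_sum] at h
  obtain ⟨i, _, hi⟩ := h
  exact ⟨i, Multiset.eq_of_mem_replicate hi⟩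

lemma sum_ms (M : ℕ) (f : Fin M → ℕ) : (ms M f).sum = ∑ i : Fin M, (i + 1 : ℕ) * f i := by
  unfold ms
  rw [Multiset.sum_sum]
  simp [mul_comm]

lemma ms_count {M : ℕ} (s : Multiset ℕ) (h : ∀ a ∈ s, 0 < a ∧ a ≤ M) :
    ms M (fun i => s.count (i + 1 : ℕ)) = s := by
  ext a
  by_cases ha : 0 < a ∧ a ≤ M
  · have := count_ms M (fun i => s.count (i + 1 : ℕ)) ⟨a - 1, by omega⟩
    simp only at this
    rwa [show a - 1 + 1 = a by omega] at this
  · rw [Multiset.count_eq_zero_of_notMem (fun hh => ha (h a hh)),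
      Multiset.count_eq_zero_of_notMem]
    intro hh
    obtain ⟨i, rfl⟩ := mem_ms hh
    exact ha ⟨by omega, by omega⟩

lemma part_le {n : ℕ} (p : n.Partition) {a : ℕ} (h : a ∈ p.parts) : a ≤ n := by
  have := Multiset.single_le_sum (fun _ _ => Nat.zero_le _) a h
  rwa [p.parts_sum] at this

lemma count_le {n : ℕ} (p : n.Partition) (a : ℕ) (ha : 0 < a) : p.parts.count a ≤ n := by
  have h1 : Multiset.replicate (p.parts.count a) a ≤ p.parts :=
    Multiset.le_count_iff_replicate_le.mp le_rfl
  obtain ⟨t, ht⟩ := Multiset.le_iff_exists_add.mp h1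
  have h2 := p.parts_sum
  rw [ht] at h2
  simp at h2
  have h3 := Nat.le_mul_of_pos_right (p.parts.count a) ha
  exact h3.trans ((Nat.le_add_right _ _).trans h2.le)

lemma card_eq_coeff (n M : ℕ) (h : n ≤ M) (S : ℕ → ℕ → Prop) :
    ((Finset.univ.filter (fun p : n.Partition =>
      ∀ i < M, S (i + 1) (p.parts.count (i + 1)))).card : ℤ) = (gf ℤ[X] X M S).coeff n := by
  have e : gf ℤ[X] X M S = ∑ f ∈ Fintype.piFinset
      (fun i : Fin M => (range (M + 1)).filter (S (i + 1))), X ^ (∑ i : Fin M, (i + 1 : ℕ) * f i) := by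
    unfold gf
    rw [Finset.prod_range (fun i => ∑ c ∈ (range (M + 1)).filter (S (i + 1)),
      (X : ℤ[X]) ^ ((i + 1) * c)), Finset.prod_univ_sum]
    refine sum_congr rfl fun f _ => ?_
    rw [Finset.prod_pow_eq_pow_sum]
  rw [e, finsetSum_coeff]
  simp only [coeff_X_pow]
  rw [Finset.sum_boole, Nat.cast_inj]
  refine Finset.card_bij' (fun p _ => fun i : Fin M => p.parts.count (i + 1 : ℕ))
    (fun f hf => ⟨ms M f, ?_, ?_⟩) ?_ ?_ ?_ ?_
  · intro a ha
    obtain ⟨i, rfl⟩ := mem_ms ha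
    omega
  · rw [sum_ms]
    exact (mem_filter.mp hf).2.symm
  · intro p hp
    have hp := (mem_filter.mp hp).2
    rw [mem_filter, Fintype.mem_piFinset]
    refine ⟨fun i => ?_, ?_⟩
    · rw [mem_filter, mem_range]
      have := count_le p (i + 1 : ℕ) (by omega)
      exact ⟨by omega, hp i i.2⟩
    · rw [← sum_ms, ms_count, p.parts_sum]
      intro a ha
      exact ⟨p.parts_pos ha, (part_le p ha).trans h⟩
  · intro f hf
    rw [mem_filter, Fintype.mem_piFinset] at hf
    rw [mem_filter]
    refine ⟨mem_univ _, fun i hi => ?_⟩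
    have := count_ms M f ⟨i, hi⟩
    simp only at this ⊢
    rw [this]
    exact (mem_filter.mp (hf.1 ⟨i, hi⟩)).2
  · intro p hp
    apply Nat.Partition.ext
    simp only
    apply ms_count
    intro a ha
    exact ⟨p.parts_pos ha, (part_le p ha).trans h⟩
  · intro f hf
    funext i
    exact count_ms M f i

end count

section gfs
variable {R : Type*} [CommRing R]
open Classical

/-- allowed multiplicities on the product side -/
def SC (i c : ℕ) : Prop := c = 0 ∨ (i % 7 ≠ 0 ∧ i % 7 ≠ 2 ∧ i % 7 ≠ 5)

/-- allowed multiplicities when the largest repeated part is `2 j` -/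
def SA (j i c : ℕ) : Prop := if i ≤ 2 * j then (if Even i then 2 ≤ c else c = 0) else c ≤ 1

lemma geom {x : R} {N : ℕ} (hx : x ^ N = 0) (i M : ℕ) (h : N ≤ M + 1) :
    (∑ c ∈ range (M + 1), x ^ ((i + 1) * c)) * (1 - x ^ (i + 1)) = 1 := by
  simp_rw [pow_mul]
  rw [geom_sum_mul_neg, ← pow_mul, pow_zero_of_le hx (by nlinarith), sub_zero]

lemma prod_seven (f : ℕ → R) (N : ℕ) : ∏ i ∈ range (7 * N), f i =
    ∏ k ∈ range N, (f (7 * k) * f (7 * k + 1) * f (7 * k + 2) * f (7 * k + 3) * f (7 * k + 4) *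
      f (7 * k + 5) * f (7 * k + 6)) := by
  induction N with
  | zero => simp
  | succ N ih =>
    rw [show 7 * (N + 1) = 7 * N + 1 + 1 + 1 + 1 + 1 + 1 + 1 by ring]
    simp only [prod_range_succ, ih]
    ring

lemma gfC {x : R} {N : ℕ} (hx : x ^ N = 0) (hN : 0 < N) :
    P x N * gf R x (7 * N) SC = (∏ k ∈ range N, (1 - x ^ (7 * k + 5))) *
      (∏ k ∈ range N, (1 - x ^ (7 * k + 2))) * P (x ^ 7) N := by
  rw [← P_large hx (show N ≤ 7 * N by omega), P, gf, ← prod_mul_distrib]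
  have : ∀ i ∈ range (7 * N), (1 - x ^ (i + 1)) *
      ∑ c ∈ (range (7 * N + 1)).filter (SC (i + 1)), x ^ ((i + 1) * c) =
      if (i + 1) % 7 ≠ 0 ∧ (i + 1) % 7 ≠ 2 ∧ (i + 1) % 7 ≠ 5 then 1 else 1 - x ^ (i + 1) := by
    intro i _
    split_ifs with h
    · rw [filter_true_of_mem (p := SC (i + 1)) (fun c _ => Or.inr h), mul_comm]
      exact geom hx i _ (by omega)
    · have : (range (7 * N + 1)).filter (SC (i + 1)) = {0} := by
        ext c
        simp only [mem_filter, mem_range, SC, h, or_false, mem_singleton]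
        omega
      rw [this]; simp
  rw [prod_congr rfl this, prod_seven, P, ← prod_mul_distrib, ← prod_mul_distrib]
  refine prod_congr rfl fun k _ => ?_
  have e1 : (7 * k + 1) % 7 = 1 := by omega
  have e2 : (7 * k + 1 + 1) % 7 = 2 := by omega
  have e3 : (7 * k + 2 + 1) % 7 = 3 := by omega
  have e4 : (7 * k + 3 + 1) % 7 = 4 := by omega
  have e5 : (7 * k + 4 + 1) % 7 = 5 := by omega
  have e6 : (7 * k + 5 + 1) % 7 = 6 := by omega
  have e7 : (7 * k + 6 + 1) % 7 = 0 := by omega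
  simp only [e1, e2, e3, e4, e5, e6, e7]
  norm_num
  ring

lemma gfA_low {x : R} {N : ℕ} (hx : x ^ N = 0) (hN : 0 < N) (L M : ℕ) (hM : N ≤ M) (j : ℕ)
    (hj : j ≤ L) :
    ∏ i ∈ range (2 * j), ∑ c ∈ (range (M + 1)).filter (SA L (i + 1)), x ^ ((i + 1) * c) =
      x ^ (2 * j ^ 2 + 2 * j) * d x j := by
  induction j with
  | zero => simp [d_zero]
  | succ j ih =>
    rw [show 2 * (j + 1) = 2 * j + 1 + 1 by ring, prod_range_succ, prod_range_succ, ih (by omega)]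
    have o : (range (M + 1)).filter (SA L (2 * j + 1)) = {0} := by
      ext c
      have h1 : 2 * j + 1 ≤ 2 * L := by omega
      have h2 : ¬ Even (2 * j + 1) := by simp
      simp only [mem_filter, mem_range, SA, if_pos h1, if_neg h2, mem_singleton]
      omega
    have ev : (range (M + 1)).filter (SA L (2 * j + 1 + 1)) = Ico 2 (M + 1) := by
      ext c
      have h1 : 2 * j + 1 + 1 ≤ 2 * L := by omega
      have h2 : Even (2 * j + 1 + 1) := ⟨j + 1, by ring⟩
      simp only [mem_filter, mem_range, SA, if_pos h1, if_pos h2, mem_Ico]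
      omega
    have s : ∑ c ∈ Ico 2 (M + 1), x ^ ((2 * j + 1 + 1) * c) = x ^ (4 * j + 4) *
        ∑ c ∈ range (M + 1), x ^ ((2 * j + 1 + 1) * c) := by
      rw [sum_Ico_eq_sum_range, mul_sum]
      have : ∑ c ∈ range (M + 1), x ^ (4 * j + 4) * x ^ ((2 * j + 1 + 1) * c) =
          ∑ c ∈ range (M + 1 - 2), x ^ (4 * j + 4) * x ^ ((2 * j + 1 + 1) * c) := by
        apply sum_stable _ (by omega)
        intro i hi
        rw [← pow_add, pow_zero_of_le hx]
        have : M ≤ i + 1 := by omega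
        nlinarith
      rw [this]
      exact sum_congr rfl fun c _ => by ring
    have g := geom hx (2 * j + 1) M (by omega)
    rw [o, ev, s, sum_singleton]
    have hd := d_succ hx j
    rw [← hd]
    rw [show 2 * j + 1 + 1 = 2 * j + 2 by ring] at g ⊢
    linear_combination x ^ (2 * (j + 1) ^ 2 + 2 * (j + 1)) * d x (j + 1) * g

lemma gfA {x : R} {N : ℕ} (hx : x ^ N = 0) (hN : 0 < N) (j : ℕ) (hj : j < N) :
    gf R x (7 * N) (SA j) = x ^ (2 * j ^ 2 + 2 * j) * d x j * E x N (2 * j + 1) := by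
  rw [gf, ← prod_range_mul_prod_Ico _ (show 2 * j ≤ 7 * N by omega),
    gfA_low hx hN j (7 * N) (by omega) j le_rfl, prod_Ico_eq_prod_range]
  congr 1
  rw [← prod_stable_add hx (2 * j + 1) (show N ≤ 7 * N - 2 * j by omega)]
  refine prod_congr rfl fun k _ => ?_
  have : (range (7 * N + 1)).filter (SA j (2 * j + k + 1)) = range 2 := by
    ext c
    have h1 : ¬ 2 * j + k + 1 ≤ 2 * j := by omega
    simp only [mem_filter, mem_range, SA, if_neg h1]
    omega
  rw [this, sum_range_succ, sum_range_one]
  simp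
  ring

theorem gf_eq {x : R} {N : ℕ} (hx : x ^ N = 0) (hN : 0 < N) :
    ∑ j ∈ range N, gf R x (7 * N) (SA j) = gf R x (7 * N) SC := by
  have h1 : ∑ j ∈ range N, gf R x (7 * N) (SA j) = B x N 0 := by
    unfold B
    refine sum_congr rfl fun j hj => ?_
    rw [gfA hx hN j (mem_range.mp hj)]
    simp only [mul_zero, add_zero, zero_add]
    ring
  have h2 := main_alg hx hN
  rw [jtp hx hN, ← gfC hx hN] at h2
  rw [h1]
  exact (P_isUnit hx N).mul_left_cancel h2

end gfs

open Polynomial in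
theorem coeff_eq (n : ℕ) :
    ∑ j ∈ range (n + 1), (gf ℤ[X] X (7 * (n + 1)) (SA j)).coeff n =
      (gf ℤ[X] X (7 * (n + 1)) SC).coeff n := by
  let I : Ideal ℤ[X] := Ideal.span {X ^ (n + 1)}
  let f := Ideal.Quotient.mk I
  have hx : (f X) ^ (n + 1) = 0 := by
    rw [← map_pow]
    exact Ideal.Quotient.eq_zero_iff_mem.mpr (Ideal.subset_span rfl)
  have h := gf_eq hx (Nat.succ_pos n)
  simp only [← map_gf f, ← map_sum] at h
  have h2 := Ideal.Quotient.eq.mp h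
  rw [Ideal.mem_span_singleton, X_pow_dvd_iff] at h2
  have := h2 n (Nat.lt_succ_self n)
  rw [coeff_sub, finsetSum_coeff] at this
  exact sub_eq_zero.mp this

section fin
open Classical

variable {n : ℕ}

/-- Andrews' condition -/
def condA (π : n.Partition) : Prop :=
  (∀ j, Odd j → π.parts.count j ≤ 1) ∧
  (∀ j, Odd j → j < largestRepeatedPart π → π.parts.count j = 0) ∧
  (∀ j, Even j → 0 < j → j < largestRepeatedPart π → 2 ≤ π.parts.count j)

lemma le_lrp (π : n.Partition) {j : ℕ} (h : 2 ≤ π.parts.count j) : j ≤ largestRepeatedPart π := by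
  unfold largestRepeatedPart
  apply Finset.le_sup (f := id)
  rw [mem_filter, Multiset.mem_toFinset]
  exact ⟨Multiset.count_pos.mp (by omega), h⟩

lemma lrp_spec (π : n.Partition) : largestRepeatedPart π = 0 ∨
    2 ≤ π.parts.count (largestRepeatedPart π) := by
  unfold largestRepeatedPart
  rcases (π.parts.toFinset.filter (fun j => 2 ≤ π.parts.count j)).eq_empty_or_nonempty with h | h
  · left; rw [h]; simp
  · right
    obtain ⟨a, ha, e⟩ := Finset.exists_mem_eq_sup _ h id
    rw [e]
    exact (mem_filter.mp ha).2

lemma lrp_le (π : n.Partition) : largestRepeatedPart π ≤ n := by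
  rcases lrp_spec π with h | h
  · omega
  · exact part_le π (Multiset.count_pos.mp (by omega))

lemma count_zero (π : n.Partition) : π.parts.count 0 = 0 :=
  Multiset.count_eq_zero_of_notMem fun h => (π.parts_pos h).ne rfl

lemma condA_iff (π : n.Partition) (j : ℕ) (hj : j < n + 1) :
    (condA π ∧ largestRepeatedPart π / 2 = j) ↔
      ∀ i < 7 * (n + 1), SA j (i + 1) (π.parts.count (i + 1)) := by
  constructor
  · rintro ⟨⟨h1, h2, h3⟩, hR⟩ i hi
    have hev : Even (largestRepeatedPart π) := by
      rcases lrp_spec π with h | h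
      · rw [h]; simp
      · by_contra ho
        have := h1 _ (Nat.not_even_iff_odd.mp ho)
        omega
    have hR2 : largestRepeatedPart π = 2 * j := by
      obtain ⟨t, ht⟩ := hev; omega
    unfold SA
    split_ifs with ha hb
    · rcases Nat.lt_or_ge (i + 1) (2 * j) with hlt | hge
      · exact h3 _ hb (by omega) (by omega)
      · rcases lrp_spec π with h | h
        · omega
        · rwa [show i + 1 = largestRepeatedPart π by omega]
    · refine h2 _ (Nat.not_even_iff_odd.mp hb) ?_
      rw [hR2]
      rcases Nat.lt_or_ge (i + 1) (2 * j) with hlt | hge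
      · exact hlt
      · exact absurd ⟨j, by omega⟩ hb
    · by_contra hc
      have := le_lrp π (j := i + 1) (by omega)
      omega
  · intro h
    have hS : ∀ i, 0 < i → SA j i (π.parts.count i) := by
      intro i hi
      rcases Nat.lt_or_ge (i - 1) (7 * (n + 1)) with hlt | hge
      · have := h (i - 1) hlt
        rwa [show i - 1 + 1 = i by omega] at this
      · rw [Multiset.count_eq_zero_of_notMem (fun hm => by have := part_le π hm; omega), SA,
          if_neg (by omega)]
        omega
    have hR : largestRepeatedPart π = 2 * j := by
      apply le_antisymm
      · rcases lrp_spec π with h0 | h0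
        · omega
        · by_contra hc
          have := hS (largestRepeatedPart π) (by omega)
          rw [SA, if_neg (by omega)] at this
          omega
      · rcases Nat.eq_zero_or_pos j with rfl | hp
        · simp
        · have := hS (2 * j) (by omega)
          rw [SA, if_pos le_rfl, if_pos (by simp)] at this
          exact le_lrp π this
    refine ⟨⟨?_, ?_, ?_⟩, by omega⟩
    · intro i hi
      have hpos := hi.pos
      have := hS i hpos
      unfold SA at this
      rw [if_neg (Nat.not_even_iff_odd.mpr hi)] at this
      split_ifs at this <;> omega
    · intro i hi hlt
      have := hS i hi.pos
      rwa [SA, if_pos (by omega), if_neg (Nat.not_even_iff_odd.mpr hi)] at this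
    · intro i hi hpos hlt
      have := hS i hpos
      rwa [SA, if_pos (by omega), if_pos hi] at this

lemma condC_iff (π : n.Partition) :
    (∀ j ∈ π.parts, j % 7 ≠ 0 ∧ j % 7 ≠ 2 ∧ j % 7 ≠ 5) ↔
      ∀ i < 7 * (n + 1), SC (i + 1) (π.parts.count (i + 1)) := by
  constructor
  · intro h i _
    by_cases hm : i + 1 ∈ π.parts
    · exact Or.inr (h _ hm)
    · exact Or.inl (Multiset.count_eq_zero_of_notMem hm)
  · intro h j hj
    have hp := π.parts_pos hj
    have hl := part_le π hj
    have := h (j - 1) (by omega)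
    rw [show j - 1 + 1 = j by omega] at this
    rcases this with h0 | h0
    · exact absurd hj (Multiset.count_eq_zero.mp h0)
    · exact h0

theorem cardA (n : ℕ) : (Finset.univ.filter (fun π : n.Partition => condA π)).card =
    ∑ j ∈ range (n + 1), (Finset.univ.filter (fun π : n.Partition =>
      ∀ i < 7 * (n + 1), SA j (i + 1) (π.parts.count (i + 1)))).card := by
  rw [Finset.card_eq_sum_card_fiberwise (f := fun π => largestRepeatedPart π / 2)
    (t := range (n + 1))]
  · refine sum_congr rfl fun j hj => ?_
    rw [filter_filter]
    congr 1
    exact filter_congr fun π _ => condA_iff π j (mem_range.mp hj)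
  · intro π _
    have := lrp_le π
    simp
    omega

theorem final (n : ℕ) : (Finset.univ.filter (fun π : n.Partition => condA π)).card =
    (Finset.univ.filter (fun π : n.Partition =>
      ∀ j ∈ π.parts, j % 7 ≠ 0 ∧ j % 7 ≠ 2 ∧ j % 7 ≠ 5)).card := by
  have h := coeff_eq n
  rw [cardA, filter_congr (fun π _ => condC_iff π)]
  apply Nat.cast_injective (R := ℤ)
  rw [Nat.cast_sum, card_eq_coeff n (7 * (n + 1)) (by omega) SC, ← h]
  exact sum_congr rfl fun j _ => card_eq_coeff n _ (by omega) _

end fin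
end RS

theorem andrews_A2_eq_C32 (n : ℕ) :
    Nat.card {π : n.Partition //
        (∀ j, Odd j → π.parts.count j ≤ 1) ∧
        (∀ j, Odd j → j < largestRepeatedPart π → π.parts.count j = 0) ∧
        (∀ j, Even j → 0 < j → j < largestRepeatedPart π → 2 ≤ π.parts.count j)} =
      Nat.card {π : n.Partition //
        ∀ j ∈ π.parts, j % 7 ≠ 0 ∧ j % 7 ≠ 2 ∧ j % 7 ≠ 5} := by
  classical
  have h := RS.final n
  rw [Nat.card_eq_fintype_card, Nat.card_eq_fintype_card, Fintype.card_subtype,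
    Fintype.card_subtype]
  convert h using 1
  congr 1
  ext π
  rw [Finset.mem_filter, Finset.mem_filter]
  exact Iff.rfl
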